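/- arXiv:2310.09264 — 12 statements merged into one kernel-verified Lean document; each statement's English description precedes it below -/
import Mathlib

section
/- Let X be a lattice-ordered group and A a sub-ℓ-group of X. Then A is a convex subset of X if and only if for every a₁, a₂ ∈ A and every x, y ∈ X one has (a₁*x ⊔ a₂*y)*(x ⊔ y)⁻¹ ∈ A. -/
/-- A sub-ℓ-group `A` of a lattice-ordered group `X` is convex iff
for all `a₁ a₂ ∈ A` and `x y ∈ X`, `(a₁*x ⊔ a₂*y)*(x ⊔ y)⁻¹ ∈ A`. -/
theorem convex_iff_term_condition {X : Type*} [Lattice X] [Group X]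
    [CovariantClass X X (· * ·) (· ≤ ·)]
    [CovariantClass X X (Function.swap (· * ·)) (· ≤ ·)]
    (A : Subgroup X) (hA : ∀ a b : X, a ∈ A → b ∈ A → a ⊔ b ∈ A) :
    (∀ a x b : X, a ∈ A → b ∈ A → a ≤ x → x ≤ b → x ∈ A) ↔
      (∀ a₁ a₂ x y : X, a₁ ∈ A → a₂ ∈ A → (a₁ * x ⊔ a₂ * y) * (x ⊔ y)⁻¹ ∈ A) := by
  constructor
  · intro hconv a₁ a₂ x y h₁ h₂
    have hinf : a₁ ⊓ a₂ ∈ A := by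
      have h := A.inv_mem (hA _ _ (A.inv_mem h₁) (A.inv_mem h₂))
      rwa [inv_sup, inv_inv, inv_inv] at h
    refine hconv _ _ _ hinf (hA _ _ h₁ h₂) ?_ ?_
    · rw [le_mul_inv_iff_mul_le, mul_sup]
      exact sup_le_sup (mul_le_mul' inf_le_left le_rfl) (mul_le_mul' inf_le_right le_rfl)
    · rw [mul_inv_le_iff_le_mul]
      exact sup_le (mul_le_mul' le_sup_left le_sup_left) (mul_le_mul' le_sup_right le_sup_right)
  · intro hterm a x b ha hb hax hxb
    have h := hterm 1 (b * a⁻¹) x a A.one_mem (A.mul_mem hb (A.inv_mem ha))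
    rw [one_mul, inv_mul_cancel_right, sup_eq_right.2 hxb, sup_eq_left.2 hax] at h
    exact A.inv_mem_iff.1 ((A.mul_mem_cancel_left hb).1 h)
end

section
/- Let X be a lattice-ordered group and A, B two sub-ℓ-groups of X. There exists a map φ : A × B → X that preserves the group multiplication and the join ⊔ (where A × B carries the componentwise group and lattice structure) and satisfies φ(a, 1) = a for all a ∈ A and φ(1, b) = b for all b ∈ B, if and only if A and B are orthogonal, i.e., |a| ⊓ |b| = 1 for all a ∈ A, b ∈ B. Moreover, such a map φ, when it exists, is necessarily given by φ(a, b) = a*b. -/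
section LatticeGroup

variable {X : Type*} [Lattice X] [Group X] [MulLeftMono X] [MulRightMono X]

/-- In a lattice-ordered group, `a * (a ⊓ b)⁻¹ * b = a ⊔ b`. -/
theorem mul_inv_inf_mul_eq_sup (a b : X) : a * (a ⊓ b)⁻¹ * b = a ⊔ b := by
  rw [inv_inf, mul_sup, sup_mul]
  simp [sup_comm]

/-- Two elements have trivial meet iff their join is their product. -/
theorem inf_eq_one_iff_sup_eq_mul {a b : X} : a ⊓ b = 1 ↔ a ⊔ b = a * b := by
  rw [← mul_inv_inf_mul_eq_sup]
  simp

theorem commute_of_inf_eq_one {a b : X} (h : a ⊓ b = 1) : Commute a b := by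
  have h' : b ⊓ a = 1 := by rwa [inf_comm]
  rw [Commute, SemiconjBy, ← inf_eq_one_iff_sup_eq_mul.1 h, ← inf_eq_one_iff_sup_eq_mul.1 h',
    sup_comm]

/-- Orthogonal elements of a lattice-ordered group commute. -/
theorem commute_of_mabs_inf_mabs_eq_one {a b : X} (h : |a|ₘ ⊓ |b|ₘ = 1) : Commute a b := by
  have commute_of_le {p q : X} (hp : 1 ≤ p) (hpa : p ≤ |a|ₘ) (hq : 1 ≤ q) (hqb : q ≤ |b|ₘ) :
      Commute p q :=
    commute_of_inf_eq_one (le_antisymm ((inf_le_inf hpa hqb).trans h.le) (le_inf hp hq))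
  have pos_le (c : X) : c⁺ᵐ ≤ |c|ₘ := sup_le (le_mabs_self c) (one_le_mabs c)
  have neg_le (c : X) : c⁻ᵐ ≤ |c|ₘ := sup_le (inv_le_mabs c) (one_le_mabs c)
  have comm_pos {p : X} (hp : 1 ≤ p) (hpa : p ≤ |a|ₘ) : Commute p b := by
    rw [← oneLePart_div_leOnePart b, div_eq_mul_inv]
    exact (commute_of_le hp hpa (one_le_oneLePart b) (pos_le b)).mul_right
      (commute_of_le hp hpa (one_le_leOnePart b) (neg_le b)).inv_right
  rw [← oneLePart_div_leOnePart a, div_eq_mul_inv]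
  exact (comm_pos (one_le_oneLePart a) (pos_le a)).mul_left
    (comm_pos (one_le_leOnePart a) (neg_le a)).inv_left

/-- On orthogonal elements, the positive part is multiplicative. -/
theorem oneLePart_mul_of_mabs_inf_mabs_eq_one {a b : X} (h : |a|ₘ ⊓ |b|ₘ = 1) :
    (a * b)⁺ᵐ = a⁺ᵐ * b⁺ᵐ := by
  have hab : a * b ≤ (a * b)⁺ᵐ := le_oneLePart _
  have h_one : 1 ≤ (a * b)⁺ᵐ := one_le_oneLePart _
  refine le_antisymm (sup_le (mul_le_mul' (le_oneLePart a) (le_oneLePart b))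
    (one_le_mul (one_le_oneLePart a) (one_le_oneLePart b))) ?_
  have ha : a ≤ (a * b)⁺ᵐ := by
    calc a ≤ (a * b)⁺ᵐ * (|a|ₘ ⊓ |b|ₘ) := by
          rw [mul_inf]
          refine le_inf ((le_mabs_self a).trans (le_mul_of_one_le_left' h_one)) ?_
          exact (le_mul_inv_iff_mul_le.2 hab).trans (mul_le_mul_right (inv_le_mabs b) _)
      _ = (a * b)⁺ᵐ := by rw [h, mul_one]
  have hb : b ≤ (a * b)⁺ᵐ := by
    calc b ≤ (|a|ₘ ⊓ |b|ₘ) * (a * b)⁺ᵐ := by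
          rw [inf_mul]
          refine le_inf ?_ ((le_mabs_self b).trans (le_mul_of_one_le_right' h_one))
          exact (le_inv_mul_iff_mul_le.2 hab).trans (mul_le_mul_left (inv_le_mabs a) _)
      _ = (a * b)⁺ᵐ := by rw [h, one_mul]
  rw [oneLePart_def a, oneLePart_def b, mul_sup, sup_mul, mul_one, one_mul]
  exact sup_le (sup_le hab hb) (sup_le ha h_one)

end LatticeGroup

/-- Two sub-ℓ-groups `A`, `B` of a lattice-ordered group `X` admit a cooperator
(a map `A × B → X` preserving multiplication and join componentwise, restricting to the
inclusions) iff they are orthogonal; moreover any such cooperator is the multiplication. -/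
theorem cooperator_iff_orthogonal {X : Type*} [Lattice X] [Group X]
    [CovariantClass X X (· * ·) (· ≤ ·)]
    [CovariantClass X X (Function.swap (· * ·)) (· ≤ ·)]
    (A B : Subgroup X)
    (hA : ∀ a b : X, a ∈ A → b ∈ A → a ⊔ b ∈ A)
    (hB : ∀ a b : X, a ∈ B → b ∈ B → a ⊔ b ∈ B) :
    ((∃ φ : X → X → X,
        (∀ a c : X, a ∈ A → c ∈ A → ∀ b d : X, b ∈ B → d ∈ B →
          φ (a * c) (b * d) = φ a b * φ c d) ∧
        (∀ a c : X, a ∈ A → c ∈ A → ∀ b d : X, b ∈ B → d ∈ B →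
          φ (a ⊔ c) (b ⊔ d) = φ a b ⊔ φ c d) ∧
        (∀ a : X, a ∈ A → φ a 1 = a) ∧
        (∀ b : X, b ∈ B → φ 1 b = b)) ↔
      (∀ a : X, a ∈ A → ∀ b : X, b ∈ B → (a ⊔ a⁻¹) ⊓ (b ⊔ b⁻¹) = 1)) ∧
    (∀ φ : X → X → X,
        (∀ a c : X, a ∈ A → c ∈ A → ∀ b d : X, b ∈ B → d ∈ B →
          φ (a * c) (b * d) = φ a b * φ c d) →
        (∀ a c : X, a ∈ A → c ∈ A → ∀ b d : X, b ∈ B → d ∈ B →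
          φ (a ⊔ c) (b ⊔ d) = φ a b ⊔ φ c d) →
        (∀ a : X, a ∈ A → φ a 1 = a) →
        (∀ b : X, b ∈ B → φ 1 b = b) →
        ∀ a : X, a ∈ A → ∀ b : X, b ∈ B → φ a b = a * b) := by
  have eq_mul (φ : X → X → X)
      (hmul : ∀ a c : X, a ∈ A → c ∈ A → ∀ b d : X, b ∈ B → d ∈ B →
        φ (a * c) (b * d) = φ a b * φ c d)
      (hφA : ∀ a : X, a ∈ A → φ a 1 = a) (hφB : ∀ b : X, b ∈ B → φ 1 b = b)
      (a : X) (ha : a ∈ A) (b : X) (hb : b ∈ B) : φ a b = a * b := by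
    simpa [hφA a ha, hφB b hb] using hmul a 1 ha A.one_mem 1 b B.one_mem hb
  refine ⟨⟨?_, fun h => ⟨fun a b => a * b, ?_, ?_, by simp, by simp⟩⟩,
    fun φ hmul _ => eq_mul φ hmul⟩
  · rintro ⟨φ, hmul, hsup, hφA, hφB⟩ a ha b hb
    have hp : |a|ₘ ∈ A := hA a a⁻¹ ha (A.inv_mem ha)
    have hq : |b|ₘ ∈ B := hB b b⁻¹ hb (B.inv_mem hb)
    have key := hsup _ 1 hp A.one_mem 1 _ B.one_mem hq
    rw [sup_eq_left.2 (one_le_mabs a), sup_eq_right.2 (one_le_mabs b), hφA _ hp, hφB _ hq,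
      eq_mul φ hmul hφA hφB _ hp _ hq] at key
    exact inf_eq_one_iff_sup_eq_mul.2 key.symm
  · intro a c _ hc b d hb _
    exact (commute_of_mabs_inf_mabs_eq_one (h c hc b hb)).mul_mul_mul_comm a d
  · intro a c ha hc b d hb hd
    have hac := A.div_mem ha hc
    have hbd := B.div_mem hb hd
    have hcbd : Commute c (b / d) := commute_of_mabs_inf_mabs_eq_one (h c hc _ hbd)
    have hcbd' : Commute c (b / d)⁺ᵐ :=
      commute_of_mabs_inf_mabs_eq_one (h c hc _ (hB _ _ hbd B.one_mem))
    have sup_eq (x y : X) : x ⊔ y = (x / y)⁺ᵐ * y := by simp [oneLePart_def, sup_mul]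
    have hdiv : a * b / (c * d) = a / c * (b / d) := by
      rw [div_eq_iff_eq_mul, ← hcbd.mul_mul_mul_comm, div_mul_cancel, div_mul_cancel]
    rw [sup_eq a c, sup_eq b d, sup_eq (a * b), hdiv,
      oneLePart_mul_of_mabs_inf_mabs_eq_one (h _ hac _ hbd)]
    exact hcbd'.mul_mul_mul_comm _ _
end

section
/- Let X be a lattice-ordered group and A, B two sub-ℓ-groups of X. Then A and B are orthogonal (i.e., |a| ⊓ |b| = 1 for all a ∈ A, b ∈ B) if and only if for every a ∈ A and b ∈ B the two equalities a*b = b*a and (a*b) ⊔ 1 = (a ⊔ 1)*(b ⊔ 1) hold. -/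
theorem inf_eq_one_of_le {X : Type*} [Lattice X] [One X] {p q r s : X}
    (hp : 1 ≤ p) (hq : 1 ≤ q) (hpr : p ≤ r) (hqs : q ≤ s) (h : r ⊓ s = 1) : p ⊓ q = 1 :=
  le_antisymm ((inf_le_inf hpr hqs).trans_eq h) (le_inf hp hq)

section LatticeOrderedGroup

variable {X : Type*} [Lattice X] [Group X] [MulLeftMono X] [MulRightMono X]

theorem inf_mul_eq_one {x y z : X} (hy : x ⊓ y = 1) (hz : x ⊓ z = 1) : x ⊓ (y * z) = 1 := by
  have hx1 : 1 ≤ x := hy ▸ inf_le_left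
  have hy1 : 1 ≤ y := hy ▸ inf_le_right
  have hz1 : 1 ≤ z := hz ▸ inf_le_right
  apply le_antisymm _ (le_inf hx1 (one_le_mul hy1 hz1))
  have hle : x ⊓ (y * z) ≤ z := by
    calc x ⊓ (y * z) ≤ x * z ⊓ y * z := inf_le_inf_right _ (le_mul_of_one_le_right' hz1)
      _ = z := by rw [← inf_mul, hy, one_mul]
  exact (le_inf inf_le_left hle).trans_eq hz

/-- If `u` and `v` are orthogonal, then `u` is the positive part of `u * v⁻¹`. -/
theorem mul_inv_sup_one_of_inf_eq_one {u v : X} (h : u ⊓ v = 1) : (u * v⁻¹) ⊔ 1 = u := by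
  rw [← mul_inv_cancel u, ← mul_sup, sup_comm, ← inv_inf, h, inv_one, mul_one]

theorem sup_eq_mul_of_inf_eq_one {p q : X} (h : p ⊓ q = 1) : p ⊔ q = p * q := by
  conv_rhs => rw [← mul_inv_sup_one_of_inf_eq_one h, sup_mul, inv_mul_cancel_right, one_mul]

/-- Orthogonal elements of a lattice-ordered group commute. -/
theorem commute_of_inf_eq_one_s4 {p q : X} (h : p ⊓ q = 1) : Commute p q := by
  rw [commute_iff_eq, ← sup_eq_mul_of_inf_eq_one h, sup_comm,
    sup_eq_mul_of_inf_eq_one ((inf_comm q p).trans h)]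

/-- If `p` is the positive part of `p * q⁻¹`, then `p` and `q` are orthogonal. -/
theorem inf_eq_one_of_mul_inv_sup_one {p q : X} (h : (p * q⁻¹) ⊔ 1 = p) : p ⊓ q = 1 := by
  rw [← mul_inv_cancel p, ← mul_sup, sup_comm, ← inv_inf] at h
  simpa using h

theorem oneLePart_le_mabs (a : X) : a⁺ᵐ ≤ |a|ₘ :=
  sup_le (le_mabs_self a) (one_le_mabs a)

theorem leOnePart_le_mabs (a : X) : a⁻ᵐ ≤ |a|ₘ :=
  sup_le (inv_le_mabs a) (one_le_mabs a)

theorem commute_and_oneLePart_mul_of_mabs_inf_mabs_eq_one {a b : X} (h : |a|ₘ ⊓ |b|ₘ = 1) :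
    Commute a b ∧ (a * b)⁺ᵐ = a⁺ᵐ * b⁺ᵐ := by
  have pp : a⁺ᵐ ⊓ b⁺ᵐ = 1 := inf_eq_one_of_le (one_le_oneLePart a) (one_le_oneLePart b)
    (oneLePart_le_mabs a) (oneLePart_le_mabs b) h
  have pn : a⁺ᵐ ⊓ b⁻ᵐ = 1 := inf_eq_one_of_le (one_le_oneLePart a) (one_le_leOnePart b)
    (oneLePart_le_mabs a) (leOnePart_le_mabs b) h
  have np : a⁻ᵐ ⊓ b⁺ᵐ = 1 := inf_eq_one_of_le (one_le_leOnePart a) (one_le_oneLePart b)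
    (leOnePart_le_mabs a) (oneLePart_le_mabs b) h
  have nn : a⁻ᵐ ⊓ b⁻ᵐ = 1 := inf_eq_one_of_le (one_le_leOnePart a) (one_le_leOnePart b)
    (leOnePart_le_mabs a) (leOnePart_le_mabs b) h
  have ha : a⁺ᵐ * (a⁻ᵐ)⁻¹ = a := by rw [← div_eq_mul_inv, oneLePart_div_leOnePart]
  have hb : b⁺ᵐ * (b⁻ᵐ)⁻¹ = b := by rw [← div_eq_mul_inv, oneLePart_div_leOnePart]
  have comm_np := (commute_of_inf_eq_one_s4 np).inv_left
  constructor
  · have hpos : Commute a⁺ᵐ b := hb ▸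
      (commute_of_inf_eq_one_s4 pp).mul_right (commute_of_inf_eq_one_s4 pn).inv_right
    have hneg : Commute (a⁻ᵐ)⁻¹ b := hb ▸
      comm_np.mul_right (commute_of_inf_eq_one_s4 nn).inv_inv
    simpa only [ha] using hpos.mul_left hneg
  · have hab : a * b = a⁺ᵐ * b⁺ᵐ * (b⁻ᵐ * a⁻ᵐ)⁻¹ := by
      calc a * b = a⁺ᵐ * ((a⁻ᵐ)⁻¹ * b⁺ᵐ) * (b⁻ᵐ)⁻¹ := by
            conv_lhs => rw [← ha, ← hb]
            simp only [mul_assoc]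
        _ = a⁺ᵐ * b⁺ᵐ * (b⁻ᵐ * a⁻ᵐ)⁻¹ := by
            rw [comm_np.eq, mul_inv_rev]
            simp only [mul_assoc]
    have hdisj : a⁺ᵐ * b⁺ᵐ ⊓ (b⁻ᵐ * a⁻ᵐ) = 1 := by
      apply inf_mul_eq_one <;> rw [inf_comm] <;> apply inf_mul_eq_one
      · rw [inf_comm, pn]
      · rw [inf_comm, oneLePart_inf_leOnePart_eq_one]
      · rw [inf_comm, oneLePart_inf_leOnePart_eq_one]
      · exact np
    rw [oneLePart_def (a * b), hab, mul_inv_sup_one_of_inf_eq_one hdisj]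

end LatticeOrderedGroup

/-- Two sub-ℓ-groups `A`, `B` of a lattice-ordered group `X` are orthogonal iff
for all `a ∈ A`, `b ∈ B` one has `a*b = b*a` and `(a*b)⁺ = a⁺ * b⁺`. -/
theorem orthogonal_iff_commute_and_pos_mul {X : Type*} [Lattice X] [Group X]
    [CovariantClass X X (· * ·) (· ≤ ·)]
    [CovariantClass X X (Function.swap (· * ·)) (· ≤ ·)]
    (A B : Subgroup X)
    (hA : ∀ a b : X, a ∈ A → b ∈ A → a ⊔ b ∈ A)
    (hB : ∀ a b : X, a ∈ B → b ∈ B → a ⊔ b ∈ B) :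
    (∀ a : X, a ∈ A → ∀ b : X, b ∈ B → (a ⊔ a⁻¹) ⊓ (b ⊔ b⁻¹) = 1) ↔
      (∀ a : X, a ∈ A → ∀ b : X, b ∈ B →
        a * b = b * a ∧ (a * b) ⊔ 1 = (a ⊔ 1) * (b ⊔ 1)) := by
  constructor
  · intro h a ha b hb
    exact commute_and_oneLePart_mul_of_mabs_inf_mabs_eq_one (h a ha b hb)
  · intro h a ha b hb
    have hpos : (|a|ₘ * |b|ₘ⁻¹) ⊔ 1 = (|a|ₘ ⊔ 1) * (|b|ₘ⁻¹ ⊔ 1) :=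
      (h _ (hA _ _ ha (A.inv_mem ha)) _ (B.inv_mem (hB _ _ hb (B.inv_mem hb)))).2
    rw [sup_eq_left.2 (one_le_mabs a), sup_eq_right.2 (inv_le_one'.2 (one_le_mabs b)),
      mul_one] at hpos
    exact inf_eq_one_of_mul_inv_sup_one hpos
end

section
/- Let X be a lattice-ordered group such that the multiplication map X × X → X preserves binary joins, i.e., (a ⊔ c)*(b ⊔ d) = (a*b) ⊔ (c*d) for all a, b, c, d ∈ X. Then X is trivial: x = 1 for every x ∈ X. (Consequently, the only internal group object in the category of lattice-ordered groups is the zero object.) -/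
/-- If multiplication of a lattice-ordered group preserves binary joins (i.e. it is an
internal group object in ℓ-groups), the group is trivial. -/
theorem internal_group_trivial {X : Type*} [Lattice X] [Group X]
    [CovariantClass X X (· * ·) (· ≤ ·)]
    [CovariantClass X X (Function.swap (· * ·)) (· ≤ ·)]
    (h : ∀ a b c d : X, (a ⊔ c) * (b ⊔ d) = (a * b) ⊔ (c * d)) :
    ∀ x : X, x = 1 := by
  intro x
  have hsq : (x ⊔ 1) * (x ⊔ 1) = x := by simpa [sup_comm] using h x 1 1 x
  have hinv : (x ⊔ 1)⁻¹ * ((x ⊔ 1) * (x ⊔ 1)) ≤ (x ⊔ 1)⁻¹ * (x ⊔ 1) :=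
    CovariantClass.elim (μ := ((· * ·) : X → X → X)) (r := (· ≤ ·)) _
      (hsq.le.trans le_sup_left)
  rw [inv_mul_cancel_left, inv_mul_cancel] at hinv
  have hone : x ⊔ 1 = 1 := le_antisymm hinv le_sup_right
  rw [← hsq, hone, one_mul]
end

section
/- Let A and B be lattice-ordered groups, p : A → B a group homomorphism preserving ⊔, and s : B → A a group homomorphism preserving ⊔ with p ∘ s = id. Then the set T = {s(b) | b ∈ B and |s(b)| ⊓ |x| = 1 for all x ∈ ker p} (i.e., the intersection of the image of s with the polar of ker p in A) is an ℓ-ideal of A: it is a subgroup closed under ⊔, it is convex in A, and it is closed under conjugation by arbitrary elements of A. -/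
section LatticeOrderedGroup

variable {G : Type*} [Lattice G] [Group G] [MulLeftMono G] [MulRightMono G]

/-- Elements disjoint from `w` are closed under products. -/
theorem mul_inf_eq_one {u v w : G} (hu : 1 ≤ u) (hv : 1 ≤ v) (huw : u ⊓ w = 1)
    (hvw : v ⊓ w = 1) : (u * v) ⊓ w = 1 := by
  have hw : 1 ≤ w := huw ▸ inf_le_right
  refine le_antisymm ?_ (le_inf (one_le_mul hu hv) hw)
  have h : (u * v) ⊓ w ≤ u := calc
    (u * v) ⊓ w ≤ (u * v) ⊓ (u * w) := inf_le_inf_left _ (le_mul_of_one_le_left' hu)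
    _ = u := by rw [← mul_inf, hvw, mul_one]
  exact (le_inf h inf_le_right).trans huw.le

theorem mabs_mul_le_mabs_mul_mabs_mul_mabs (a b : G) : |a * b|ₘ ≤ |a|ₘ * |b|ₘ * |a|ₘ := by
  refine mabs_le'.2 ⟨?_, ?_⟩
  · exact (mul_le_mul' (le_mabs_self a) (le_mabs_self b)).trans
      (le_mul_of_one_le_right' (one_le_mabs a))
  · rw [mul_inv_rev, mul_assoc]
    exact (mul_le_mul' (inv_le_mabs b) (inv_le_mabs a)).trans
      (le_mul_of_one_le_left' (one_le_mabs a))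

theorem mabs_conj (a x : G) : |a * x * a⁻¹|ₘ = a * |x|ₘ * a⁻¹ := by
  simp only [mabs, mul_sup, sup_mul, mul_inv_rev, inv_inv, mul_assoc]

theorem mabs_inf_eq_one_of_le {a w u : G} (hau : |a|ₘ ≤ u) (huw : u ⊓ w = 1) :
    |a|ₘ ⊓ w = 1 :=
  le_antisymm ((inf_le_inf_right _ hau).trans huw.le)
    (le_inf (one_le_mabs a) (huw ▸ inf_le_right))

/-- The polar of a subset of a lattice-ordered group, as a subgroup. -/
def polarSubgroup (S : Set G) : Subgroup G where
  carrier := {y | ∀ x ∈ S, |y|ₘ ⊓ |x|ₘ = 1}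
  one_mem' x _ := by simp
  mul_mem' {a b} ha hb x hx :=
    mabs_inf_eq_one_of_le (mabs_mul_le_mabs_mul_mabs_mul_mabs a b) <|
      mul_inf_eq_one (one_le_mul (one_le_mabs a) (one_le_mabs b)) (one_le_mabs a)
        (mul_inf_eq_one (one_le_mabs a) (one_le_mabs b) (ha x hx) (hb x hx)) (ha x hx)
  inv_mem' {a} ha x hx := by simpa using ha x hx

theorem mem_polarSubgroup_of_mabs_le_mul {S : Set G} {a b y : G} (ha : a ∈ polarSubgroup S)
    (hb : b ∈ polarSubgroup S) (h : |y|ₘ ≤ |a|ₘ * |b|ₘ) : y ∈ polarSubgroup S :=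
  fun x hx => mabs_inf_eq_one_of_le h
    (mul_inf_eq_one (one_le_mabs a) (one_le_mabs b) (ha x hx) (hb x hx))

/-- Polars are convex. -/
theorem mem_polarSubgroup_of_le_of_le {S : Set G} {a b y : G} (ha : a ∈ polarSubgroup S)
    (hb : b ∈ polarSubgroup S) (hay : a ≤ y) (hyb : y ≤ b) : y ∈ polarSubgroup S := by
  refine mem_polarSubgroup_of_mabs_le_mul ha hb (mabs_le'.2 ⟨?_, ?_⟩)
  · exact (hyb.trans (le_mabs_self b)).trans (le_mul_of_one_le_left' (one_le_mabs a))
  · exact ((inv_le_inv_iff.2 hay).trans (inv_le_mabs a)).trans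
      (le_mul_of_one_le_right' (one_le_mabs b))

theorem sup_mem_polarSubgroup {S : Set G} {a b : G} (ha : a ∈ polarSubgroup S)
    (hb : b ∈ polarSubgroup S) : a ⊔ b ∈ polarSubgroup S := by
  have hle := le_mul_of_one_le_right' (a := |a|ₘ) (one_le_mabs b)
  refine mem_polarSubgroup_of_mabs_le_mul ha hb (mabs_le'.2 ⟨sup_le ?_ ?_, ?_⟩)
  · exact (le_mabs_self a).trans hle
  · exact (le_mabs_self b).trans (le_mul_of_one_le_left' (one_le_mabs a))
  · exact ((inv_le_inv_iff.2 le_sup_left).trans (inv_le_mabs a)).trans hle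

/-- The polar of a normal subgroup is normal. -/
theorem polarSubgroup_normal (N : Subgroup G) [N.Normal] :
    (polarSubgroup (N : Set G)).Normal where
  conj_mem y hy a x hx := by
    have h := hy (a⁻¹ * x * a) (by simpa using ‹N.Normal›.conj_mem x hx a⁻¹)
    have hx' : x = a * (a⁻¹ * x * a) * a⁻¹ := by group
    rw [hx', mabs_conj, mabs_conj, ← inf_mul, ← mul_inf, h, mul_one, mul_inv_cancel]

theorem eq_one_of_mem_of_mem_polarSubgroup {S : Set G} {y : G} (hy : y ∈ S)
    (hy' : y ∈ polarSubgroup S) : y = 1 := by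
  have h : |y|ₘ ≤ 1 := by simpa using (hy' y hy).le
  exact le_antisymm ((le_mabs_self y).trans h) (inv_le_one'.1 ((inv_le_mabs y).trans h))

end LatticeOrderedGroup

/-- For a section `s` of `p`, an element `z` of the polar of `ker p` is in the image of `s` as soon
as `s (p z)` is also in the polar. -/
theorem eq_section_of_mem_polarSubgroup_ker {A B : Type*} [Lattice A] [Group A]
    [MulLeftMono A] [MulRightMono A] [Group B] {p : A →* B} {s : B →* A}
    (hps : ∀ b : B, p (s b) = b) {z : A} (hz : z ∈ polarSubgroup (p.ker : Set A))
    (hsz : s (p z) ∈ polarSubgroup (p.ker : Set A)) : z = s (p z) :=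
  mul_inv_eq_one.1 <| eq_one_of_mem_of_mem_polarSubgroup
    (show z * (s (p z))⁻¹ ∈ (p.ker : Set A) by simp [MonoidHom.mem_ker, hps])
    (mul_mem hz (inv_mem hsz))

/-- Given a split extension of lattice-ordered groups, the intersection of the image of the
section `s` with the polar of `ker p` is an ℓ-ideal of `A`. -/
theorem image_section_inter_polar_is_ideal {A B : Type*}
    [Lattice A] [Group A]
    [CovariantClass A A (· * ·) (· ≤ ·)]
    [CovariantClass A A (Function.swap (· * ·)) (· ≤ ·)]
    [Lattice B] [Group B]
    [CovariantClass B B (· * ·) (· ≤ ·)]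
    [CovariantClass B B (Function.swap (· * ·)) (· ≤ ·)]
    (p : A →* B) (s : B →* A)
    (hp : ∀ a₁ a₂ : A, p (a₁ ⊔ a₂) = p a₁ ⊔ p a₂)
    (hs : ∀ b₁ b₂ : B, s (b₁ ⊔ b₂) = s b₁ ⊔ s b₂)
    (hps : ∀ b : B, p (s b) = b) :
    let T : Set A :=
      {a : A | ∃ b : B, a = s b ∧ ∀ x : A, p x = 1 → (s b ⊔ (s b)⁻¹) ⊓ (x ⊔ x⁻¹) = 1}
    -- subgroup
    (1 ∈ T) ∧
    (∀ y z : A, y ∈ T → z ∈ T → y * z ∈ T) ∧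
    (∀ y : A, y ∈ T → y⁻¹ ∈ T) ∧
    -- closed under joins
    (∀ y z : A, y ∈ T → z ∈ T → y ⊔ z ∈ T) ∧
    -- convex in `A`
    (∀ t x t' : A, t ∈ T → t' ∈ T → t ≤ x → x ≤ t' → x ∈ T) ∧
    -- closed under conjugation by arbitrary elements of `A`
    (∀ a y : A, y ∈ T → a⁻¹ * y * a ∈ T) := by
  intro T
  have hpm : Monotone p := fun x y h => by
    rw [← sup_eq_right, ← hp, sup_eq_right.2 h]
  have hsm : Monotone s := fun x y h => by
    rw [← sup_eq_right, ← hs, sup_eq_right.2 h]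
  set P := polarSubgroup (p.ker : Set A)
  have hPn : P.Normal := polarSubgroup_normal p.ker
  have mem_T (a : A) : a ∈ T ↔ ∃ b, a = s b ∧ s b ∈ P := Iff.rfl
  have mem_of_mem {z : A} (hz : z ∈ P) (hsz : s (p z) ∈ P) : z ∈ T :=
    ⟨p z, eq_section_of_mem_polarSubgroup_ker hps hz hsz, hsz⟩
  simp only [mem_T] at mem_of_mem ⊢
  refine ⟨⟨1, by simp, by simp⟩, ?_, ?_, ?_, ?_, ?_⟩
  · rintro _ _ ⟨b, rfl, hb⟩ ⟨c, rfl, hc⟩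
    exact ⟨b * c, by simp, by simpa using mul_mem hb hc⟩
  · rintro _ ⟨b, rfl, hb⟩
    exact ⟨b⁻¹, by simp, by simpa using hb⟩
  · rintro _ _ ⟨b, rfl, hb⟩ ⟨c, rfl, hc⟩
    exact ⟨b ⊔ c, (hs b c).symm, by simpa only [hs] using sup_mem_polarSubgroup hb hc⟩
  · rintro _ x _ ⟨b, rfl, hb⟩ ⟨c, rfl, hc⟩ hbx hxc
    refine mem_of_mem (mem_polarSubgroup_of_le_of_le hb hc hbx hxc)
      (mem_polarSubgroup_of_le_of_le hb hc (hsm ?_) (hsm ?_))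
    · simpa only [hps] using hpm hbx
    · simpa only [hps] using hpm hxc
  · rintro a _ ⟨b, rfl, hb⟩
    refine mem_of_mem (by simpa using hPn.conj_mem _ hb a⁻¹) ?_
    simpa [hps] using hPn.conj_mem _ hb (s (p a))⁻¹
end

section
/- Let A be a lattice-ordered group, B a sub-ℓ-group of A, and X, Y subsets of A such that: (i) |x| ⊓ |y| = 1 for all x ∈ X, y ∈ Y; and (ii) Y is closed under conjugation by elements of B, i.e., b⁻¹*y*b ∈ Y and b*y*b⁻¹ ∈ Y for all b ∈ B, y ∈ Y. Then for all x ∈ X, y ∈ Y and b ∈ B the identity (x*b ⊔ 1)*(b ⊔ 1)⁻¹*(y*b ⊔ 1) = (x*y*b) ⊔ 1 holds. -/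
section LatticeOrderedGroup

variable {A : Type*} [Lattice A] [Group A] [MulLeftMono A] [MulRightMono A]

/-- The lattice of a (not necessarily commutative) lattice-ordered group is distributive. -/
theorem latticeGroup_inf_sup_right (a b c : A) : a ⊓ b ⊔ c = (a ⊔ c) ⊓ (b ⊔ c) := by
  apply le_antisymm
  · exact le_inf (sup_le_sup_right inf_le_left c) (sup_le_sup_right inf_le_right c)
  · have key : ∀ e : A, a ⊓ b ≤ e → e ⊔ c ≤ e * (a ⊓ b)⁻¹ * (a ⊓ b ⊔ c) := by
      intro e he
      rw [mul_sup, inv_mul_cancel_right]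
      refine sup_le_sup_left (le_mul_of_one_le_left' ?_) e
      rwa [le_mul_inv_iff_mul_le, one_mul]
    calc (a ⊔ c) ⊓ (b ⊔ c)
        ≤ a * (a ⊓ b)⁻¹ * (a ⊓ b ⊔ c) ⊓ b * (a ⊓ b)⁻¹ * (a ⊓ b ⊔ c) :=
          inf_le_inf (key a inf_le_left) (key b inf_le_right)
      _ = a ⊓ b ⊔ c := by rw [← inf_mul, ← inf_mul, mul_inv_cancel, one_mul]

theorem mul_eq_sup_of_inf_eq_one {a b : A} (h : a ⊓ b = 1) : a * b = a ⊔ b := by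
  have h' : a * (a ⊓ b)⁻¹ * b = a ⊔ b := by
    rw [inv_inf, mul_sup, sup_mul, mul_inv_cancel, one_mul, inv_mul_cancel_right, sup_comm]
  rwa [h, inv_one, mul_one] at h'

theorem mul_sup_one_of_orthogonal {p q : A} (h : (p ⊔ p⁻¹) ⊓ (q ⊔ q⁻¹) = 1) :
    p * q ⊔ 1 = p ⊔ q ⊔ 1 := by
  have hp : 1 ≤ p ⊔ p⁻¹ := one_le_mabs p
  have hq : 1 ≤ q ⊔ q⁻¹ := one_le_mabs q
  apply le_antisymm
  · have hpos : (p ⊔ 1) ⊓ (q ⊔ 1) = 1 :=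
      le_antisymm ((inf_le_inf (sup_le le_sup_left hp) (sup_le le_sup_left hq)).trans h.le)
        (le_inf le_sup_right le_sup_right)
    refine sup_le ?_ le_sup_right
    calc p * q ≤ (p ⊔ 1) * (q ⊔ 1) := mul_le_mul' le_sup_left le_sup_left
      _ = p ⊔ q ⊔ 1 := by rw [mul_eq_sup_of_inf_eq_one hpos, ← sup_sup_distrib_right]
  · have h₁ : 1 ≤ q ⊔ p⁻¹ := by
      rw [← inv_le_one', inv_sup, inv_inv, inf_comm, ← h]
      exact inf_le_inf le_sup_left le_sup_right
    have h₂ : 1 ≤ p ⊔ q⁻¹ := by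
      rw [← inv_le_one', inv_sup, inv_inv, ← h]
      exact inf_le_inf le_sup_right le_sup_left
    refine sup_le (sup_le ?_ ?_) le_sup_right
    · simpa [mul_sup] using mul_le_mul_right h₁ p
    · simpa [sup_mul] using mul_le_mul_left h₂ q

theorem mul_inf_one_of_orthogonal {p q : A} (h : (p ⊔ p⁻¹) ⊓ (q ⊔ q⁻¹) = 1) :
    p * q ⊓ 1 = p ⊓ q ⊓ 1 := by
  have h' : (q⁻¹ ⊔ q⁻¹⁻¹) ⊓ (p⁻¹ ⊔ p⁻¹⁻¹) = 1 := by
    rw [inv_inv, inv_inv, sup_comm q⁻¹, sup_comm p⁻¹, inf_comm, h]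
  apply inv_injective
  rw [inv_inf, inv_inf, inv_inf, mul_inv_rev, inv_one, mul_sup_one_of_orthogonal h',
    sup_comm q⁻¹]

theorem eq_of_sup_one_eq_of_inf_one_eq {a b : A} (hs : a ⊔ 1 = b ⊔ 1) (hi : a ⊓ 1 = b ⊓ 1) :
    a = b := by
  have key : ∀ e : A, e = (e ⊔ 1) * (e ⊓ 1) := by
    intro e
    have h : (e ⊔ 1) * (e ⊓ 1)⁻¹⁻¹ = e := by
      rw [mul_inv_eq_iff_eq_mul, inv_inf, inv_one, mul_sup, mul_inv_cancel, mul_one, sup_comm]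
    rwa [inv_inv, eq_comm] at h
  rw [key a, key b, hs, hi]

/-- If `d ⊔ c = 1`, the lattice endomorphism `z ↦ z * d ⊔ c` is multiplicative on
orthogonal pairs. -/
theorem mul_sup_mul_mul_sup_of_orthogonal {c d x y : A} (hdc : d ⊔ c = 1)
    (h : (x ⊔ x⁻¹) ⊓ (y ⊔ y⁻¹) = 1) :
    (x * d ⊔ c) * (y * d ⊔ c) = x * y * d ⊔ c := by
  have map_sup : ∀ a b : A, (a ⊔ b) * d ⊔ c = (a * d ⊔ c) ⊔ (b * d ⊔ c) := by
    intro a b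
    rw [sup_mul, sup_sup_distrib_right]
  have map_inf : ∀ a b : A, (a ⊓ b) * d ⊔ c = (a * d ⊔ c) ⊓ (b * d ⊔ c) := by
    intro a b
    rw [inf_mul, latticeGroup_inf_sup_right]
  have map_one : 1 * d ⊔ c = 1 := by rw [one_mul, hdc]
  have abs_le : ∀ z : A, (z * d ⊔ c) ⊔ (z * d ⊔ c)⁻¹ ≤ z ⊔ z⁻¹ := by
    intro z
    have hz : 1 ≤ z ⊔ z⁻¹ := one_le_mabs z
    have hc : c ≤ 1 := hdc ▸ le_sup_right
    have hd : d ≤ 1 := hdc ▸ le_sup_left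
    refine sup_le (sup_le ((mul_le_of_le_one_right' hd).trans le_sup_left) (hc.trans hz)) ?_
    have hle : z ⊓ 1 ≤ z * d ⊔ c := by
      calc z ⊓ 1 = (z ⊓ 1) * d ⊔ (z ⊓ 1) * c := by rw [← mul_sup, hdc, mul_one]
        _ ≤ z * d ⊔ c :=
          sup_le_sup (mul_le_mul_left inf_le_left d) (mul_le_of_le_one_left' inf_le_right)
    refine (inv_le_inv_iff.mpr hle).trans ?_
    rw [inv_inf, inv_one]
    exact sup_le le_sup_right hz
  have horth : ((x * d ⊔ c) ⊔ (x * d ⊔ c)⁻¹) ⊓ ((y * d ⊔ c) ⊔ (y * d ⊔ c)⁻¹) = 1 :=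
    le_antisymm (h ▸ inf_le_inf (abs_le x) (abs_le y))
      (le_inf (one_le_mabs _) (one_le_mabs _))
  apply eq_of_sup_one_eq_of_inf_one_eq
  · have hw := map_sup (x * y) 1
    rw [mul_sup_one_of_orthogonal h, map_sup, map_sup, map_one] at hw
    rw [mul_sup_one_of_orthogonal horth, hw]
  · have hw := map_inf (x * y) 1
    rw [mul_inf_one_of_orthogonal h, map_inf, map_inf, map_one] at hw
    rw [mul_inf_one_of_orthogonal horth, hw]

end LatticeOrderedGroup

/-- If `X ⊥ Y` and `Y` is closed under conjugation by elements of the sub-ℓ-group `B`,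
then `(x*b ⊔ 1)*(b ⊔ 1)⁻¹*(y*b ⊔ 1) = x*y*b ⊔ 1` for all `x ∈ X`, `y ∈ Y`, `b ∈ B`. -/
theorem cooperator_identity_in_points {A : Type*} [Lattice A] [Group A]
    [CovariantClass A A (· * ·) (· ≤ ·)]
    [CovariantClass A A (Function.swap (· * ·)) (· ≤ ·)]
    (B : Subgroup A)
    (hB : ∀ a b : A, a ∈ B → b ∈ B → a ⊔ b ∈ B)
    (X Y : Set A)
    (horth : ∀ x ∈ X, ∀ y ∈ Y, (x ⊔ x⁻¹) ⊓ (y ⊔ y⁻¹) = 1)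
    (hconj : ∀ b : A, b ∈ B → ∀ y ∈ Y, b⁻¹ * y * b ∈ Y ∧ b * y * b⁻¹ ∈ Y) :
    ∀ x ∈ X, ∀ y ∈ Y, ∀ b : A, b ∈ B →
      (x * b ⊔ 1) * (b ⊔ 1)⁻¹ * (y * b ⊔ 1) = (x * y * b) ⊔ 1 := by
  intro x hx y hy b _
  have factor : ∀ z : A, z * b ⊔ 1 = (z * (b * (b ⊔ 1)⁻¹) ⊔ (b ⊔ 1)⁻¹) * (b ⊔ 1) := by
    intro z
    rw [sup_mul, inv_mul_cancel, mul_assoc, inv_mul_cancel_right]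
  have hdc : b * (b ⊔ 1)⁻¹ ⊔ (b ⊔ 1)⁻¹ = 1 := by
    have h := sup_mul b 1 (b ⊔ 1)⁻¹
    rwa [mul_inv_cancel, one_mul, eq_comm] at h
  rw [factor x, factor y, factor (x * y), mul_inv_cancel_right, ← mul_assoc,
    mul_sup_mul_mul_sup_of_orthogonal hdc (horth x hx y hy)]
end

section
/- Let A be a lattice-ordered group, K an ℓ-ideal of A, B a sub-ℓ-group of A, and X̄ a subset of K closed under conjugation by elements of B (i.e., b⁻¹*x*b ∈ X̄ and b*x*b⁻¹ ∈ X̄ for all b ∈ B, x ∈ X̄). Let P = {y ∈ K | |y| ⊓ |x| = 1 for all x ∈ X̄} be the polar of X̄ inside K. Then P is closed under the action of B: (a) b⁻¹*y*b ∈ P for all b ∈ B and y ∈ P; and (b) (y₁*b₁ ⊔ y₂*b₂)*(b₁ ⊔ b₂)⁻¹ ∈ P for all y₁, y₂ ∈ P and b₁, b₂ ∈ B. -/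
section LatticeOrderedGroup

variable {A : Type*} [Lattice A] [Group A] [MulLeftMono A] [MulRightMono A]

theorem mul_inf_eq_one_of_inf_eq_one {a b c : A} (ha : 1 ≤ a) (hb : 1 ≤ b) (hc : 1 ≤ c)
    (hac : a ⊓ c = 1) (hbc : b ⊓ c = 1) : a * b ⊓ c = 1 := by
  apply le_antisymm _ (le_inf (one_le_mul ha hb) hc)
  have h : a⁻¹ * (a * b ⊓ c) ≤ 1 := by
    rw [← hbc]
    refine le_inf (inv_mul_le_iff_le_mul.2 inf_le_left) (inv_mul_le_iff_le_mul.2 ?_)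
    exact inf_le_right.trans (le_mul_of_one_le_left' ha)
  rw [← hac]
  exact le_inf (by simpa using inv_mul_le_iff_le_mul.1 h) inf_le_right

theorem mabs_conj_s11 (b y : A) : |b * y * b⁻¹|ₘ = b * |y|ₘ * b⁻¹ := by
  simp only [mabs, mul_sup, sup_mul, conj_inv]

theorem mabs_sup_mul_inv_sup_le {u y₁ y₂ : A} (b₁ b₂ : A) (h₁ : |y₁|ₘ ≤ u) (h₂ : |y₂|ₘ ≤ u) :
    |(y₁ * b₁ ⊔ y₂ * b₂) * (b₁ ⊔ b₂)⁻¹|ₘ ≤ u := by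
  obtain ⟨hy₁, hy₁'⟩ := mabs_le'.1 h₁
  obtain ⟨hy₂, hy₂'⟩ := mabs_le'.1 h₂
  refine mabs_le'.2 ⟨?_, ?_⟩
  · rw [mul_inv_le_iff_le_mul, mul_sup]
    exact sup_le_sup (mul_le_mul_left hy₁ b₁) (mul_le_mul_left hy₂ b₂)
  · rw [inv_le', le_mul_inv_iff_mul_le, mul_sup]
    exact sup_le_sup (mul_le_mul_left (inv_le'.1 hy₁') b₁) (mul_le_mul_left (inv_le'.1 hy₂') b₂)

end LatticeOrderedGroup

/-- The polar, inside the kernel `K`, of a subset `X̄` of `K` closed under the action of `B`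
is itself closed under the action of `B`. -/
theorem polar_closed_under_action {A : Type*} [Lattice A] [Group A]
    [CovariantClass A A (· * ·) (· ≤ ·)]
    [CovariantClass A A (Function.swap (· * ·)) (· ≤ ·)]
    (K : Subgroup A) (hKnormal : K.Normal)
    (hKsup : ∀ a b : A, a ∈ K → b ∈ K → a ⊔ b ∈ K)
    (hKconvex : ∀ a x b : A, a ∈ K → b ∈ K → a ≤ x → x ≤ b → x ∈ K)
    (B : Subgroup A)
    (hBsup : ∀ a b : A, a ∈ B → b ∈ B → a ⊔ b ∈ B)
    (Xbar : Set A) (hXK : Xbar ⊆ (K : Set A))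
    (hXconj : ∀ b : A, b ∈ B → ∀ x ∈ Xbar, b⁻¹ * x * b ∈ Xbar ∧ b * x * b⁻¹ ∈ Xbar) :
    let P : Set A := {y : A | y ∈ K ∧ ∀ x ∈ Xbar, (y ⊔ y⁻¹) ⊓ (x ⊔ x⁻¹) = 1}
    (∀ b : A, b ∈ B → ∀ y ∈ P, b⁻¹ * y * b ∈ P) ∧
    (∀ y₁ ∈ P, ∀ y₂ ∈ P, ∀ b₁ : A, b₁ ∈ B → ∀ b₂ : A, b₂ ∈ B →
      (y₁ * b₁ ⊔ y₂ * b₂) * (b₁ ⊔ b₂)⁻¹ ∈ P) := by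
  have : MulLeftMono A := ‹CovariantClass A A (· * ·) (· ≤ ·)›
  have : MulRightMono A := ‹CovariantClass A A (Function.swap (· * ·)) (· ≤ ·)›
  intro P
  refine ⟨?_, ?_⟩
  · rintro b hb y ⟨hyK, hy⟩
    refine ⟨by simpa using hKnormal.conj_mem y hyK b⁻¹, fun x hx => ?_⟩
    change |b⁻¹ * y * b|ₘ ⊓ |x|ₘ = 1
    have hyx : |y|ₘ ⊓ |b * x * b⁻¹|ₘ = 1 := hy _ (hXconj b hb x hx).2
    have hconj : |b⁻¹ * y * b|ₘ = b⁻¹ * |y|ₘ * b := by simpa using mabs_conj_s11 b⁻¹ y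
    calc |b⁻¹ * y * b|ₘ ⊓ |x|ₘ = b⁻¹ * (|y|ₘ ⊓ |b * x * b⁻¹|ₘ) * b := by
          rw [hconj, mabs_conj_s11, mul_inf, inf_mul]
          simp [mul_assoc]
      _ = 1 := by simp [hyx]
  · rintro y₁ ⟨hy₁K, hy₁⟩ y₂ ⟨hy₂K, hy₂⟩ b₁ - b₂ -
    have habs := mabs_sup_mul_inv_sup_le b₁ b₂
      (le_mul_of_one_le_right' (one_le_mabs y₂) : |y₁|ₘ ≤ |y₁|ₘ * |y₂|ₘ)
      (le_mul_of_one_le_left' (one_le_mabs y₁))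
    have huK : |y₁|ₘ * |y₂|ₘ ∈ K :=
      K.mul_mem (hKsup _ _ hy₁K (K.inv_mem hy₁K)) (hKsup _ _ hy₂K (K.inv_mem hy₂K))
    refine ⟨hKconvex _ _ _ (K.inv_mem huK) huK (inv_le'.1 (mabs_le'.1 habs).2)
      (mabs_le'.1 habs).1, fun x hx => le_antisymm ?_ (le_inf (one_le_mabs _) (one_le_mabs x))⟩
    exact (inf_le_inf_right _ habs).trans (mul_inf_eq_one_of_inf_eq_one (one_le_mabs y₁)
      (one_le_mabs y₂) (one_le_mabs x) (hy₁ x hx) (hy₂ x hx)).le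
end

section
/- Let X be a lattice-ordered group and H, K two ℓ-ideals of X. Then: (i) |h| ⊓ |k| ∈ H ∩ K for all h ∈ H and k ∈ K (so the images of H and K in X/(H ∩ K) are orthogonal); and (ii) if I is any ℓ-ideal of X such that |h| ⊓ |k| ∈ I for all h ∈ H and k ∈ K, then H ∩ K ⊆ I. In other words, H ∩ K is the smallest ℓ-ideal I of X such that the images of H and K in the quotient X/I are orthogonal; equivalently, the Huq commutator of the ideals H and K equals H ∩ K. -/
/-- For ℓ-ideals `H`, `K` of a lattice-ordered group `X`, the intersection `H ∩ K` is the
smallest ℓ-ideal `I` such that the images of `H` and `K` in `X/I` are orthogonal;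
i.e. the Huq commutator `[H,K]` equals `H ∩ K`. -/
theorem huq_commutator_eq_inter {X : Type*} [Lattice X] [Group X]
    [CovariantClass X X (· * ·) (· ≤ ·)]
    [CovariantClass X X (Function.swap (· * ·)) (· ≤ ·)]
    (H K : Subgroup X) (hHnormal : H.Normal) (hKnormal : K.Normal)
    (hHsup : ∀ a b : X, a ∈ H → b ∈ H → a ⊔ b ∈ H)
    (hKsup : ∀ a b : X, a ∈ K → b ∈ K → a ⊔ b ∈ K)
    (hHconvex : ∀ a x b : X, a ∈ H → b ∈ H → a ≤ x → x ≤ b → x ∈ H)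
    (hKconvex : ∀ a x b : X, a ∈ K → b ∈ K → a ≤ x → x ≤ b → x ∈ K) :
    -- (i) the images of `H` and `K` in the quotient by `H ∩ K` are orthogonal
    (∀ h : X, h ∈ H → ∀ k : X, k ∈ K → (h ⊔ h⁻¹) ⊓ (k ⊔ k⁻¹) ∈ H ⊓ K) ∧
    -- (ii) `H ∩ K` is contained in any ℓ-ideal `I` with this property
    (∀ I : Subgroup X, I.Normal →
      (∀ a b : X, a ∈ I → b ∈ I → a ⊔ b ∈ I) →
      (∀ a x b : X, a ∈ I → b ∈ I → a ≤ x → x ≤ b → x ∈ I) →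
      (∀ h : X, h ∈ H → ∀ k : X, k ∈ K → (h ⊔ h⁻¹) ⊓ (k ⊔ k⁻¹) ∈ I) →
      H ⊓ K ≤ I) := by
  have one_le (a : X) : 1 ≤ a ⊔ a⁻¹ := one_le_mabs a
  refine ⟨fun h hh k hk => ⟨?_, ?_⟩, fun I _ _ hIconvex hI x hx => ?_⟩
  · exact hHconvex 1 _ (h ⊔ h⁻¹) H.one_mem (hHsup _ _ hh (H.inv_mem hh))
      (le_inf (one_le h) (one_le k)) inf_le_left
  · exact hKconvex 1 _ (k ⊔ k⁻¹) K.one_mem (hKsup _ _ hk (K.inv_mem hk))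
      (le_inf (one_le h) (one_le k)) inf_le_right
  · have habs : x ⊔ x⁻¹ ∈ I := by simpa only [inf_idem] using hI x hx.1 x hx.2
    exact hIconvex _ x _ (I.inv_mem habs) habs (inv_le_of_inv_le' le_sup_right) le_sup_left
end

section
/- In every abelian (commutative) lattice-ordered group, for all elements k, h, b the identity (k*h*b ⊔ 1)*(b ⊔ 1)⁻¹ = (k ⊓ h) * ( (k⁻¹*(k^2*b ⊔ 1)*(b ⊔ 1)⁻¹) ⊔ (h⁻¹*(h^2*b ⊔ 1)*(b ⊔ 1)⁻¹) ) holds. In particular, ((k ⊔ h)*b ⊔ (k ⊓ h)⁻¹)*(b ⊔ 1)⁻¹ = (k⁻¹*(k^2*b ⊔ 1)*(b ⊔ 1)⁻¹) ⊔ (h⁻¹*(h^2*b ⊔ 1)*(b ⊔ 1)⁻¹) and (k*h*b ⊔ 1)*(b ⊔ 1)⁻¹ = (k ⊓ h)*((k ⊔ h)*b ⊔ (k ⊓ h)⁻¹)*(b ⊔ 1)⁻¹. -/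
theorem inv_mul_sq_mul_sup_one {A : Type*} [Lattice A] [CommGroup A] [MulLeftMono A] (k b : A) :
    k⁻¹ * (k ^ 2 * b ⊔ 1) = k * b ⊔ k⁻¹ := by
  rw [mul_sup, mul_one, pow_two, mul_assoc, inv_mul_cancel_left]

theorem inf_mul_sup_mul_sup_inv_inf {A : Type*} [Lattice A] [CommGroup A] [MulLeftMono A]
    (k h b : A) : (k ⊓ h) * ((k ⊔ h) * b ⊔ (k ⊓ h)⁻¹) = k * h * b ⊔ 1 := by
  rw [mul_sup, ← mul_assoc, inf_mul_sup, mul_inv_cancel]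

/-- Identities in an abelian lattice-ordered group used in the proof of algebraic
coherence of `ℓAb`. -/
theorem abelian_lgroup_identities {A : Type*} [Lattice A] [CommGroup A]
    [CovariantClass A A (· * ·) (· ≤ ·)] :
    ∀ k h b : A,
      (k * h * b ⊔ 1) * (b ⊔ 1)⁻¹ =
        (k ⊓ h) * ((k⁻¹ * (k ^ 2 * b ⊔ 1) * (b ⊔ 1)⁻¹) ⊔
          (h⁻¹ * (h ^ 2 * b ⊔ 1) * (b ⊔ 1)⁻¹)) ∧
      ((k ⊔ h) * b ⊔ (k ⊓ h)⁻¹) * (b ⊔ 1)⁻¹ =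
        (k⁻¹ * (k ^ 2 * b ⊔ 1) * (b ⊔ 1)⁻¹) ⊔ (h⁻¹ * (h ^ 2 * b ⊔ 1) * (b ⊔ 1)⁻¹) ∧
      (k * h * b ⊔ 1) * (b ⊔ 1)⁻¹ =
        (k ⊓ h) * (((k ⊔ h) * b ⊔ (k ⊓ h)⁻¹) * (b ⊔ 1)⁻¹) := by
  intro k h b
  have hsup : ((k ⊔ h) * b ⊔ (k ⊓ h)⁻¹) * (b ⊔ 1)⁻¹ =
      (k⁻¹ * (k ^ 2 * b ⊔ 1) * (b ⊔ 1)⁻¹) ⊔ (h⁻¹ * (h ^ 2 * b ⊔ 1) * (b ⊔ 1)⁻¹) := by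
    rw [← sup_mul, inv_mul_sq_mul_sup_one, inv_mul_sq_mul_sup_one, sup_mul k h b, inv_inf,
      sup_sup_sup_comm]
  have hprod : (k * h * b ⊔ 1) * (b ⊔ 1)⁻¹ =
      (k ⊓ h) * (((k ⊔ h) * b ⊔ (k ⊓ h)⁻¹) * (b ⊔ 1)⁻¹) := by
    rw [← mul_assoc, inf_mul_sup_mul_sup_inv_inf]
  exact ⟨hsup ▸ hprod, hsup, hprod⟩
end

section
/- Let A be an abelian lattice-ordered group, B a subgroup of A, and L a subgroup of A. Then the following are equivalent: (i) (l₁*b₁ ⊔ l₂*b₂)*(b₁ ⊔ b₂)⁻¹ ∈ L for all l₁, l₂ ∈ L and b₁, b₂ ∈ B; (ii) (l*b ⊔ 1)*(b ⊔ 1)⁻¹ ∈ L for all l ∈ L and b ∈ B. (This follows from the identity, valid for all elements of an abelian ℓ-group: (l₁*b₁ ⊔ l₂*b₂)*(b₁ ⊔ b₂)⁻¹ = l₂ * (l₂⁻¹*l₁*b₁*b₂⁻¹ ⊔ 1) * (b₁*b₂⁻¹ ⊔ 1)⁻¹.) -/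
/-- In an abelian lattice-ordered group, the two-variable action term reduces to the
one-variable one. -/
theorem sup_mul_inv_sup_eq {A : Type*} [Lattice A] [CommGroup A] [MulLeftMono A]
    (l₁ l₂ b₁ b₂ : A) :
    (l₁ * b₁ ⊔ l₂ * b₂) * (b₁ ⊔ b₂)⁻¹ =
      l₂ * ((l₂⁻¹ * l₁ * (b₁ * b₂⁻¹) ⊔ 1) * (b₁ * b₂⁻¹ ⊔ 1)⁻¹) := by
  have hnum : l₁ * b₁ ⊔ l₂ * b₂ = (l₂⁻¹ * l₁ * (b₁ * b₂⁻¹) ⊔ 1) * (l₂ * b₂) := by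
    rw [sup_mul, one_mul]
    congr 1
    rw [mul_mul_mul_comm, inv_mul_cancel_right, inv_mul_cancel_comm]
  have hden : b₁ ⊔ b₂ = (b₁ * b₂⁻¹ ⊔ 1) * b₂ := by
    rw [sup_mul, one_mul, inv_mul_cancel_right]
  rw [hnum, hden, mul_inv, mul_mul_mul_comm, mul_inv_cancel_right, mul_comm]

/-- For an abelian lattice-ordered group, a subgroup `L` is closed under the two-variable
action condition iff it is closed under the one-variable one. -/
theorem closed_action_iff_simple {A : Type*} [Lattice A] [CommGroup A]
    [CovariantClass A A (· * ·) (· ≤ ·)]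
    (B : Subgroup A) (L : Subgroup A) :
    (∀ l₁ : A, l₁ ∈ L → ∀ l₂ : A, l₂ ∈ L → ∀ b₁ : A, b₁ ∈ B → ∀ b₂ : A, b₂ ∈ B →
        (l₁ * b₁ ⊔ l₂ * b₂) * (b₁ ⊔ b₂)⁻¹ ∈ L) ↔
      (∀ l : A, l ∈ L → ∀ b : A, b ∈ B → (l * b ⊔ 1) * (b ⊔ 1)⁻¹ ∈ L) := by
  constructor
  · intro h l hl b hb
    simpa only [one_mul] using h l hl 1 L.one_mem b hb 1 B.one_mem
  · intro h l₁ hl₁ l₂ hl₂ b₁ hb₁ b₂ hb₂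
    rw [sup_mul_inv_sup_eq]
    exact L.mul_mem hl₂ (h _ (L.mul_mem (L.inv_mem hl₂) hl₁) _ (B.mul_mem hb₁ (B.inv_mem hb₂)))
end

section
/- Let A be an abelian lattice-ordered group, B a sub-ℓ-group of A, and K, H sub-ℓ-groups of A that are closed under the action of B, meaning (k*b ⊔ 1)*(b ⊔ 1)⁻¹ ∈ K for all k ∈ K, b ∈ B, and (h*b ⊔ 1)*(b ⊔ 1)⁻¹ ∈ H for all h ∈ H, b ∈ B. Let L ⊆ A be the sub-ℓ-group generated by K ∪ H, i.e., a subset containing K ∪ H, closed under multiplication, inverses, ⊔ and ⊓, and contained in every subset of A with these properties containing K ∪ H. Then L is closed under the action of B: (z*b ⊔ 1)*(b ⊔ 1)⁻¹ ∈ L for all z ∈ L and b ∈ B. (This is the key step showing that the category of abelian lattice-ordered groups is algebraically coherent.) -/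
section LatticeOrderedGroup

variable {A : Type*} [Lattice A] [CommGroup A]

/-- The elements dominated, together with their inverses, by a product of elements of `K` and `H`
above `1`. -/
def dominatedBy (K H : Subgroup A) : Set A :=
  {z | ∃ k ∈ K, ∃ h ∈ H, 1 ≤ k ∧ 1 ≤ h ∧ z ≤ k * h ∧ z⁻¹ ≤ k * h}

theorem dominatedBy_comm (K H : Subgroup A) : dominatedBy K H = dominatedBy H K := by
  ext z
  constructor <;> rintro ⟨k, hk, h, hh, hk1, hh1, hz, hz'⟩ <;>
    exact ⟨h, hh, k, hk, hh1, hk1, mul_comm k h ▸ hz, mul_comm k h ▸ hz'⟩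

theorem inv_mem_dominatedBy {K H : Subgroup A} {x : A} (hx : x ∈ dominatedBy K H) :
    x⁻¹ ∈ dominatedBy K H := by
  obtain ⟨k, hk, h, hh, hk1, hh1, hz, hz'⟩ := hx
  exact ⟨k, hk, h, hh, hk1, hh1, hz', by rwa [inv_inv]⟩

variable [CovariantClass A A (· * ·) (· ≤ ·)]

/-- The action of `b` on `x`, in terms of the positive and negative parts of `b`. -/
theorem action_eq_sup (x b : A) :
    (x * b ⊔ 1) * (b ⊔ 1)⁻¹ = x * (b⁻¹ ⊔ 1)⁻¹ ⊔ (b ⊔ 1)⁻¹ := by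
  have h : b * (b ⊔ 1)⁻¹ = (b⁻¹ ⊔ 1)⁻¹ := by
    rw [inv_sup, inv_sup, mul_inf]
    simp [inf_comm]
  rw [sup_mul, one_mul, mul_assoc, h]

theorem one_le_mul_inv_sup_mul_inv {p n s t : A} (hpn : n ⊓ p = 1) (hs : 1 ≤ s) (ht : 1 ≤ t) :
    1 ≤ s * n⁻¹ ⊔ t * p⁻¹ :=
  calc (1 : A) = n⁻¹ ⊔ p⁻¹ := by rw [← inv_inf, hpn, inv_one]
    _ ≤ s * n⁻¹ ⊔ t * p⁻¹ :=
      sup_le_sup (le_mul_of_one_le_left' hs) (le_mul_of_one_le_left' ht)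

/-- If `c⁻¹ ≤ x ≤ c` and `1 ≤ c`, then the action of `b` on `x` only depends on the positive and
negative parts of `b` truncated at `c`. -/
theorem action_eq_sup_truncated {x c : A} (b : A) (hc : 1 ≤ c) (hxc : x ≤ c) (hxc' : x⁻¹ ≤ c) :
    (x * b ⊔ 1) * (b ⊔ 1)⁻¹ = x * ((b⁻¹ ⊔ 1) ⊓ c)⁻¹ ⊔ ((b ⊔ 1) ⊓ c)⁻¹ := by
  rw [action_eq_sup]
  have hpn : (b⁻¹ ⊔ 1) ⊓ (b ⊔ 1) = 1 := by
    have := oneLePart_inf_leOnePart_eq_one b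
    rwa [inf_comm, oneLePart_def, leOnePart_def] at this
  generalize b⁻¹ ⊔ 1 = n at *
  generalize b ⊔ 1 = p at *
  have hcx : 1 ≤ c * x := by simpa using mul_le_mul_left hxc' x
  have hcx' : 1 ≤ c * x⁻¹ := by simpa using mul_le_mul_left hxc x⁻¹
  have lower : c⁻¹ ≤ x * n⁻¹ ⊔ p⁻¹ := by
    have := one_le_mul_inv_sup_mul_inv hpn hcx hc
    rw [mul_assoc, ← mul_sup] at this
    simpa using mul_le_mul_right this c⁻¹
  have upper : x * c⁻¹ ≤ x * n⁻¹ ⊔ p⁻¹ := by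
    have := mul_le_mul_right (one_le_mul_inv_sup_mul_inv hpn hc hcx') (x * c⁻¹)
    rw [mul_sup, mul_one] at this
    convert this using 2
    · rw [mul_assoc, inv_mul_cancel_left]
    · rw [mul_assoc x, mul_assoc c, inv_mul_cancel_left, mul_inv_cancel_left]
  apply le_antisymm
  · exact sup_le_sup (mul_le_mul_right (inv_le_inv_iff.mpr inf_le_left) x)
      (inv_le_inv_iff.mpr inf_le_left)
  · rw [inv_inf, inv_inf, mul_sup]
    exact sup_le (sup_le le_sup_left upper) (sup_le le_sup_right lower)

/-- A subgroup closed under the action of `b⁻¹`, where `1 ≤ b`, is closed under truncation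
at `b`. -/
theorem inf_mem_of_action_mem {K : Subgroup A} {b k : A} (hb : 1 ≤ b) (hk : k ∈ K)
    (hact : (k * b⁻¹ ⊔ 1) * (b⁻¹ ⊔ 1)⁻¹ ∈ K) : b ⊓ k ∈ K := by
  rw [sup_eq_right.mpr (inv_le_one'.mpr hb), inv_one, mul_one] at hact
  have h : b ⊓ k = k * (k * b⁻¹ ⊔ 1)⁻¹ := by
    rw [inv_sup, mul_inf]
    simp
  rw [h]
  exact K.mul_mem hk (K.inv_mem hact)

theorem subset_dominatedBy_left {K H : Subgroup A} (hK : ∀ a b : A, a ∈ K → b ∈ K → a ⊔ b ∈ K) :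
    (K : Set A) ⊆ dominatedBy K H := fun k hk =>
  ⟨|k|ₘ, hK _ _ hk (K.inv_mem hk), 1, H.one_mem, one_le_mabs k, le_rfl,
    by simpa using le_mabs_self k, by simpa using inv_le_mabs k⟩

theorem mul_mem_dominatedBy {K H : Subgroup A} {x y : A} (hx : x ∈ dominatedBy K H)
    (hy : y ∈ dominatedBy K H) : x * y ∈ dominatedBy K H := by
  obtain ⟨k, hk, h, hh, hk1, hh1, hz, hz'⟩ := hx
  obtain ⟨l, hl, g, hg, hl1, hg1, hw, hw'⟩ := hy
  refine ⟨k * l, K.mul_mem hk hl, h * g, H.mul_mem hh hg, one_le_mul hk1 hl1,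
    one_le_mul hh1 hg1, ?_, ?_⟩
  · rw [mul_mul_mul_comm]
    exact mul_le_mul' hz hw
  · rw [mul_mul_mul_comm, mul_inv]
    exact mul_le_mul' hz' hw'

theorem sup_mem_dominatedBy {K H : Subgroup A} {x y : A} (hx : x ∈ dominatedBy K H)
    (hy : y ∈ dominatedBy K H) : x ⊔ y ∈ dominatedBy K H := by
  obtain ⟨k, hk, h, hh, hk1, hh1, hz, hz'⟩ := hx
  obtain ⟨l, hl, g, hg, hl1, hg1, hw, hw'⟩ := hy
  have hkh : k * h ≤ k * l * (h * g) :=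
    mul_le_mul' (le_mul_of_one_le_right' hl1) (le_mul_of_one_le_right' hg1)
  have hlg : l * g ≤ k * l * (h * g) :=
    mul_le_mul' (le_mul_of_one_le_left' hk1) (le_mul_of_one_le_left' hh1)
  exact ⟨k * l, K.mul_mem hk hl, h * g, H.mul_mem hh hg, one_le_mul hk1 hl1, one_le_mul hh1 hg1,
    sup_le (hz.trans hkh) (hw.trans hlg), (inv_le_inv_iff.mpr le_sup_left).trans (hz'.trans hkh)⟩

theorem inf_mem_dominatedBy {K H : Subgroup A} {x y : A} (hx : x ∈ dominatedBy K H)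
    (hy : y ∈ dominatedBy K H) : x ⊓ y ∈ dominatedBy K H := by
  have := inv_mem_dominatedBy (sup_mem_dominatedBy (inv_mem_dominatedBy hx)
    (inv_mem_dominatedBy hy))
  simpa [inv_sup] using this

end LatticeOrderedGroup

/-- In an abelian lattice-ordered group, the sub-ℓ-group generated by two sub-ℓ-groups
closed under the action of `B` is itself closed under the action of `B`. -/
theorem join_closed_under_action {A : Type*} [Lattice A] [CommGroup A]
    [CovariantClass A A (· * ·) (· ≤ ·)]
    (B : Subgroup A) (hBsup : ∀ a b : A, a ∈ B → b ∈ B → a ⊔ b ∈ B)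
    (K H : Subgroup A)
    (hKsup : ∀ a b : A, a ∈ K → b ∈ K → a ⊔ b ∈ K)
    (hHsup : ∀ a b : A, a ∈ H → b ∈ H → a ⊔ b ∈ H)
    (hKact : ∀ k : A, k ∈ K → ∀ b : A, b ∈ B → (k * b ⊔ 1) * (b ⊔ 1)⁻¹ ∈ K)
    (hHact : ∀ h : A, h ∈ H → ∀ b : A, b ∈ B → (h * b ⊔ 1) * (b ⊔ 1)⁻¹ ∈ H)
    -- `L` is the sub-ℓ-group generated by `K ∪ H`
    (L : Set A)
    (hKL : (K : Set A) ⊆ L) (hHL : (H : Set A) ⊆ L)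
    (hLmul : ∀ x ∈ L, ∀ y ∈ L, x * y ∈ L)
    (hLinv : ∀ x ∈ L, x⁻¹ ∈ L)
    (hLsup : ∀ x ∈ L, ∀ y ∈ L, x ⊔ y ∈ L)
    (hLinf : ∀ x ∈ L, ∀ y ∈ L, x ⊓ y ∈ L)
    (hLmin : ∀ M : Set A, (K : Set A) ⊆ M → (H : Set A) ⊆ M →
      (∀ x ∈ M, ∀ y ∈ M, x * y ∈ M) → (∀ x ∈ M, x⁻¹ ∈ M) →
      (∀ x ∈ M, ∀ y ∈ M, x ⊔ y ∈ M) → (∀ x ∈ M, ∀ y ∈ M, x ⊓ y ∈ M) → L ⊆ M) :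
    ∀ z ∈ L, ∀ b : A, b ∈ B → (z * b ⊔ 1) * (b ⊔ 1)⁻¹ ∈ L := by
  intro z hz b hb
  obtain ⟨k, hk, h, hh, hk1, hh1, hzc, hzc'⟩ : z ∈ dominatedBy K H :=
    hLmin (dominatedBy K H) (subset_dominatedBy_left hKsup)
      (dominatedBy_comm H K ▸ subset_dominatedBy_left hHsup)
      (fun _ hx _ hy => mul_mem_dominatedBy hx hy) (fun _ hx => inv_mem_dominatedBy hx)
      (fun _ hx _ hy => sup_mem_dominatedBy hx hy) (fun _ hx _ hy => inf_mem_dominatedBy hx hy) hz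
  let := CommGroup.toDistribLattice A
  have hkh : k * h ≤ k * k ⊔ h * h := by
    have := mul_le_mul_right (one_le_mabs (k * h⁻¹)) (k * h)
    rw [mabs, mul_sup, mul_one] at this
    convert this using 2
    · rw [mul_mul_mul_comm, mul_inv_cancel, mul_one]
    · rw [mul_inv, inv_inv, mul_mul_mul_comm, mul_inv_cancel, one_mul]
  have trunc : ∀ p ∈ B, 1 ≤ p → p ⊓ (k * k ⊔ h * h) ∈ L := by
    intro p hp hp1
    have e : p ⊓ (k * k ⊔ h * h) = p ⊓ (k * k) ⊔ p ⊓ (h * h) := inf_sup_left p (k * k) (h * h)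
    rw [e]
    exact hLsup _
      (hKL (inf_mem_of_action_mem hp1 (K.mul_mem hk hk)
        (hKact _ (K.mul_mem hk hk) _ (B.inv_mem hp)))) _
      (hHL (inf_mem_of_action_mem hp1 (H.mul_mem hh hh)
        (hHact _ (H.mul_mem hh hh) _ (B.inv_mem hp))))
  rw [action_eq_sup_truncated b ((one_le_mul hk1 hh1).trans hkh) (hzc.trans hkh)
    (hzc'.trans hkh)]
  exact hLsup _
    (hLmul _ hz _ (hLinv _ (trunc _ (hBsup _ _ (B.inv_mem hb) B.one_mem) le_sup_right))) _
    (hLinv _ (trunc _ (hBsup _ _ hb B.one_mem) le_sup_right))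
end

section
/- Let A be an abelian lattice-ordered group and K, H sub-ℓ-groups of A. Let L ⊆ A be the sub-ℓ-group generated by K ∪ H, i.e., a subset containing K ∪ H, closed under multiplication, inverses, ⊔ and ⊓, and contained in every subset of A with these properties containing K ∪ H. Then every element z ∈ L can be written as z = ⨆_{i ∈ I} ⨅_{j ∈ J} k_{i,j}*h_{i,j} for some nonempty finite index sets I, J and elements k_{i,j} ∈ K, h_{i,j} ∈ H (a finite join of finite meets of products of an element of K with an element of H). -/
/-- A nonempty finset with at most `N` elements is the image of `Finset.range N`. -/
lemma Finset.Nonempty.exists_image_range_eq {α : Type*} [DecidableEq α] {s : Finset α}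
    (hs : s.Nonempty) {N : ℕ} (hN : s.card ≤ N) :
    ∃ f : ℕ → α, (Finset.range N).image f = s := by
  obtain ⟨a, ha⟩ := hs
  refine ⟨fun j => if hj : j < s.card then s.equivFin.symm ⟨j, hj⟩ else a, ?_⟩
  ext x
  simp only [Finset.mem_image, Finset.mem_range]
  constructor
  · rintro ⟨j, -, rfl⟩
    split_ifs
    · exact Subtype.prop _
    · exact ha
  · intro hx
    exact ⟨s.equivFin ⟨x, hx⟩, (Fin.is_lt _).trans_le hN, by simp⟩

/-- A finite join of finite meets of elements of `s` can be written with the joins and the meets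
indexed by finite sets of natural numbers, the meets all over the same index set. -/
lemma exists_eq_sup'_inf'_of_mem_supClosure_infClosure {α : Type*} [Lattice α] {s : Set α} {z : α}
    (hz : z ∈ supClosure (infClosure s)) :
    ∃ (I J : Finset ℕ) (hI : I.Nonempty) (hJ : J.Nonempty) (p : ℕ → ℕ → α),
      (∀ i ∈ I, ∀ j ∈ J, p i j ∈ s) ∧ z = I.sup' hI (fun i => J.inf' hJ (p i)) := by
  classical
  obtain ⟨t, ht, hts, rfl⟩ := hz
  obtain ⟨g, hg⟩ := ht.exists_image_range_eq le_rfl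
  have hgt : ∀ i ∈ Finset.range t.card, g i ∈ infClosure s := fun i hi =>
    hts (by rw [← hg]; exact Finset.mem_coe.2 (Finset.mem_image_of_mem g hi))
  choose! u hu hus hug using hgt
  set N := (Finset.range t.card).sup (fun i => (u i).card)
  have hp : ∀ i ∈ Finset.range t.card, ∃ f : ℕ → α, (Finset.range N).image f = u i :=
    fun i hi => (hu i hi).exists_image_range_eq
      (Finset.le_sup (f := fun i => (u i).card) hi)
  have : Nonempty α := ⟨g 0⟩
  choose! p hp using hp
  have hI : (Finset.range t.card).Nonempty := by simpa using ht.card_pos.ne'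
  have hJ : (Finset.range N).Nonempty := by
    obtain ⟨i, hi⟩ := hI
    exact Finset.image_nonempty.1 (hp i hi ▸ hu i hi)
  refine ⟨Finset.range t.card, Finset.range N, hI, hJ, p, fun i hi j hj => hus i hi ?_, ?_⟩
  · rw [← hp i hi]
    exact Finset.mem_coe.2 (Finset.mem_image_of_mem _ hj)
  · calc t.sup' ht id = ((Finset.range t.card).image g).sup' (hI.image g) id :=
          Finset.sup'_congr _ hg.symm fun _ _ => rfl
      _ = (Finset.range t.card).sup' hI g := Finset.sup'_image _ _
      _ = _ := Finset.sup'_congr _ rfl fun i hi => by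
          rw [← hug i hi]
          calc (u i).inf' (hu i hi) id
              = ((Finset.range N).image (p i)).inf' (hJ.image _) id :=
                Finset.inf'_congr _ (hp i hi).symm fun _ _ => rfl
            _ = (Finset.range N).inf' hJ (p i) := Finset.inf'_image _ _

section LatticeOrderedGroup

variable {A : Type*} [Lattice A] [CommGroup A] [MulLeftMono A] (P : Subgroup A) {x y : A}

/-- The sublattice generated by a subgroup is closed under inverses. -/
lemma Subgroup.inv_mem_latticeClosure (hx : x ∈ latticeClosure (P : Set A)) :
    x⁻¹ ∈ latticeClosure (P : Set A) := by
  induction hx using latticeClosure_sup_inf_induction with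
  | mem a ha => exact subset_latticeClosure (P.inv_mem ha)
  | sup a _ b _ iha ihb =>
    rw [inv_sup]
    exact isSublattice_latticeClosure.infClosed iha ihb
  | inf a _ b _ iha ihb =>
    rw [inv_inf]
    exact isSublattice_latticeClosure.supClosed iha ihb

/-- The sublattice generated by a subgroup is closed under multiplication. -/
lemma Subgroup.mul_mem_latticeClosure (hx : x ∈ latticeClosure (P : Set A))
    (hy : y ∈ latticeClosure (P : Set A)) : x * y ∈ latticeClosure (P : Set A) := by
  induction hx using latticeClosure_sup_inf_induction with
  | mem a ha =>
    induction hy using latticeClosure_sup_inf_induction with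
    | mem b hb => exact subset_latticeClosure (P.mul_mem ha hb)
    | sup b _ c _ ihb ihc =>
      rw [mul_sup]
      exact isSublattice_latticeClosure.supClosed ihb ihc
    | inf b _ c _ ihb ihc =>
      rw [mul_inf]
      exact isSublattice_latticeClosure.infClosed ihb ihc
  | sup a _ b _ iha ihb =>
    rw [sup_mul]
    exact isSublattice_latticeClosure.supClosed iha ihb
  | inf a _ b _ iha ihb =>
    rw [inf_mul]
    exact isSublattice_latticeClosure.infClosed iha ihb

/-- In an abelian lattice-ordered group, elements of the sublattice generated by a set are finite
joins of finite meets of elements of that set. -/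
lemma supClosure_infClosure_of_commGroup (s : Set A) :
    supClosure (infClosure s) = latticeClosure s :=
  letI := CommGroup.toDistribLattice A
  supClosure_infClosure s

end LatticeOrderedGroup

/-- In an abelian lattice-ordered group, every element of the sub-ℓ-group generated by two
sub-ℓ-groups `K` and `H` is a finite join of finite meets of products `k * h` with
`k ∈ K`, `h ∈ H`. -/
theorem mem_join_eq_sup_inf {A : Type*} [Lattice A] [CommGroup A]
    [CovariantClass A A (· * ·) (· ≤ ·)]
    (K H : Subgroup A)
    (hKsup : ∀ a b : A, a ∈ K → b ∈ K → a ⊔ b ∈ K)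
    (hHsup : ∀ a b : A, a ∈ H → b ∈ H → a ⊔ b ∈ H)
    -- `L` is the sub-ℓ-group generated by `K ∪ H`
    (L : Set A)
    (hKL : (K : Set A) ⊆ L) (hHL : (H : Set A) ⊆ L)
    (hLmul : ∀ x ∈ L, ∀ y ∈ L, x * y ∈ L)
    (hLinv : ∀ x ∈ L, x⁻¹ ∈ L)
    (hLsup : ∀ x ∈ L, ∀ y ∈ L, x ⊔ y ∈ L)
    (hLinf : ∀ x ∈ L, ∀ y ∈ L, x ⊓ y ∈ L)
    (hLmin : ∀ M : Set A, (K : Set A) ⊆ M → (H : Set A) ⊆ M →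
      (∀ x ∈ M, ∀ y ∈ M, x * y ∈ M) → (∀ x ∈ M, x⁻¹ ∈ M) →
      (∀ x ∈ M, ∀ y ∈ M, x ⊔ y ∈ M) → (∀ x ∈ M, ∀ y ∈ M, x ⊓ y ∈ M) → L ⊆ M) :
    ∀ z ∈ L, ∃ (I J : Finset ℕ) (hI : I.Nonempty) (hJ : J.Nonempty) (k h : ℕ → ℕ → A),
      (∀ i ∈ I, ∀ j ∈ J, k i j ∈ K ∧ h i j ∈ H) ∧
      z = I.sup' hI (fun i => J.inf' hJ (fun j => k i j * h i j)) := by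
  intro z hz
  have : MulLeftMono A := ‹_›
  have hz' : z ∈ latticeClosure ((K ⊔ H : Subgroup A) : Set A) :=
    hLmin _ (fun x hx => subset_latticeClosure (Subgroup.mem_sup_left hx))
      (fun x hx => subset_latticeClosure (Subgroup.mem_sup_right hx))
      (fun _ hx _ hy => Subgroup.mul_mem_latticeClosure _ hx hy)
      (fun _ hx => Subgroup.inv_mem_latticeClosure _ hx)
      (fun _ hx _ hy => isSublattice_latticeClosure.supClosed hx hy)
      (fun _ hx _ hy => isSublattice_latticeClosure.infClosed hx hy) hz
  rw [← supClosure_infClosure_of_commGroup] at hz'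
  obtain ⟨I, J, hI, hJ, p, hp, rfl⟩ := exists_eq_sup'_inf'_of_mem_supClosure_infClosure hz'
  have hkh : ∀ i ∈ I, ∀ j ∈ J, ∃ k ∈ K, ∃ h ∈ H, k * h = p i j :=
    fun i hi j hj => Subgroup.mem_sup.1 (hp i hi j hj)
  choose! k hk h hh hkh using hkh
  exact ⟨I, J, hI, hJ, k, h, fun i hi j hj => ⟨hk i hi j hj, hh i hi j hj⟩,
    Finset.sup'_congr _ rfl fun i hi => Finset.inf'_congr _ rfl fun j hj =>
      (hkh i hi j hj).symm⟩
end
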